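/- Let c > 0 and define φ(t,s) = (√(t/(c²−t²) + t²s/(c²−t²)²) + √(c²s/(c²−t²)²))². Set U = (sφ + s(t−s)φ_s)/φ and W = (φ_t + φ_s)/φ. Then on the region 0 < s < t < c the quantity K := −(2/φ)·( s(W_t + W_s) − s²(t−s)·W_s²/U_s + W ) equals −4. -/

import Mathlib

open Real

/-- Partial derivative in the second variable `s`. -/
noncomputable def dS (F : ℝ → ℝ → ℝ) (t s : ℝ) : ℝ := deriv (F t) s

/-- Partial derivative in the first variable `t`. -/
noncomputable def dT (F : ℝ → ℝ → ℝ) (t s : ℝ) : ℝ := deriv (fun u => F u s) t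

/-- `U = (sφ + s(t−s)φ_s)/φ`. -/
noncomputable def Uf (φ : ℝ → ℝ → ℝ) (t s : ℝ) : ℝ :=
  (s * φ t s + s * (t - s) * dS φ t s) / φ t s

/-- `W = (φ_t + φ_s)/φ`. -/
noncomputable def Wf (φ : ℝ → ℝ → ℝ) (t s : ℝ) : ℝ :=
  (dT φ t s + dS φ t s) / φ t s

/-- The region `0 < s < t` (with `p = (t, s)`). -/
def Reg : Set (ℝ × ℝ) := {p | 0 < p.2 ∧ p.2 < p.1}

/-- Left-hand side of the weakly Kähler equation. -/
noncomputable def WK (φ : ℝ → ℝ → ℝ) (t s : ℝ) : ℝ :=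
  (φ t s - s * dS φ t s) * (φ t s + (t - s) * dS φ t s) *
    (dS φ t s - dT φ t s + s * (dT (dS φ) t s + dS (dS φ) t s)) +
  s * (t - s) * dS (dS φ) t s *
    (φ t s * (dS φ t s - dT φ t s) + s * dS φ t s * (dT φ t s + dS φ t s))


/-- closed form of the metric function -/
noncomputable def phiC (c t s : ℝ) : ℝ :=
  (t * (c^2 - t^2 + t*s) + c^2 * s + 2 * c * (√(t*s) * √(c^2 - t^2 + t*s))) / (c^2 - t^2)^2

noncomputable def WC (c t s : ℝ) : ℝ :=
  c * (c^2 - t^2 + 2*(t*s)) / (√(t*s) * √(c^2 - t^2 + t*s) * (c^2 - t^2)) + 2 * t / (c^2 - t^2)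

noncomputable def UC (c t s : ℝ) : ℝ := c * √(t*s) / √(c^2 - t^2 + t*s)

theorem reg_pos {c t s : ℝ} (hs : 0 < s) (hst : s < t) (htc : t < c) :
    0 < t ∧ 0 < c ∧ 0 < c^2 - t^2 ∧ 0 < t*s ∧ 0 < c^2 - t^2 + t*s := by
  have ht : 0 < t := hs.trans hst
  have hD : 0 < c^2 - t^2 := by nlinarith
  have := mul_pos ht hs
  exact ⟨ht, ht.trans htc, hD, this, by linarith⟩

theorem phi_eq {c t s : ℝ} (hs : 0 < s) (hst : s < t) (htc : t < c) :
    (√(t / (c ^ 2 - t ^ 2) + t ^ 2 * s / (c ^ 2 - t ^ 2) ^ 2) +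
        √(c ^ 2 * s / (c ^ 2 - t ^ 2) ^ 2)) ^ 2 = phiC c t s := by
  obtain ⟨ht, hc, hD, hx, hp⟩ := reg_pos hs hst htc
  have e1 : t / (c ^ 2 - t ^ 2) + t ^ 2 * s / (c ^ 2 - t ^ 2) ^ 2
      = t * (c^2 - t^2 + t*s) / (c^2 - t^2)^2 := by
    field_simp
  have e2 : √(t * (c^2 - t^2 + t*s) / (c^2 - t^2)^2)
      = √t * √(c^2 - t^2 + t*s) / (c^2 - t^2) := by
    rw [Real.sqrt_div' _ (by positivity), Real.sqrt_sq hD.le, Real.sqrt_mul ht.le]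
  have e3 : √(c ^ 2 * s / (c ^ 2 - t ^ 2) ^ 2) = c * √s / (c^2 - t^2) := by
    rw [Real.sqrt_div' _ (by positivity), Real.sqrt_sq hD.le, Real.sqrt_mul (by positivity),
      Real.sqrt_sq hc.le]
  rw [e1, e2, e3, phiC, Real.sqrt_mul ht.le, ← add_div, div_pow]
  congr 1
  have h1 := Real.sq_sqrt ht.le
  have h2 := Real.sq_sqrt hs.le
  have h3 := Real.sq_sqrt hp.le
  linear_combination (√(c^2 - t^2 + t*s))^2 * h1 + c^2 * h2 + t * h3

theorem x_s {t s : ℝ} (hx : 0 < t*s) :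
    HasDerivAt (fun v => √(t*v)) (t / (2 * √(t*s))) s := by
  have := ((hasDerivAt_id s).const_mul t).sqrt hx.ne'
  simpa using this

theorem x_t {t s : ℝ} (hx : 0 < t*s) :
    HasDerivAt (fun u => √(u*s)) (s / (2 * √(t*s))) t := by
  have := ((hasDerivAt_id t).mul_const s).sqrt hx.ne'
  simpa using this

theorem p_s {c t s : ℝ} (hp : 0 < c^2 - t^2 + t*s) :
    HasDerivAt (fun v => √(c^2 - t^2 + t*v)) (t / (2 * √(c^2 - t^2 + t*s))) s := by
  have := (((hasDerivAt_id s).const_mul t).const_add (c^2 - t^2)).sqrt hp.ne'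
  simpa using this

theorem D_t {c t : ℝ} : HasDerivAt (fun u => c^2 - u^2) (-(2*t)) t := by
  have := ((hasDerivAt_id t).pow 2).const_sub (c^2)
  simpa using this

theorem p_t {c t s : ℝ} (hp : 0 < c^2 - t^2 + t*s) :
    HasDerivAt (fun u => √(c^2 - u^2 + u*s)) ((-(2*t) + s) / (2 * √(c^2 - t^2 + t*s))) t := by
  have := ((D_t (c := c) (t := t)).add ((hasDerivAt_id t).mul_const s)).sqrt hp.ne'
  simpa using this

theorem phi_s {c t s : ℝ} (hs : 0 < s) (hst : s < t) (htc : t < c) :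
    HasDerivAt (fun v => phiC c t v)
     ((t^2 + c^2 + 2*c*(t / (2 * √(t*s)) * √(c^2 - t^2 + t*s)
        + √(t*s) * (t / (2 * √(c^2 - t^2 + t*s))))) / (c^2 - t^2)^2) s := by
  obtain ⟨ht, hc, hD, hx, hp⟩ := reg_pos hs hst htc
  have := (((((((hasDerivAt_id s).const_mul t).const_add (c^2 - t^2)).const_mul t).add
    ((hasDerivAt_id s).const_mul (c^2))).add
    (((x_s hx).mul (p_s hp)).const_mul (2*c))).div_const ((c^2 - t^2)^2))
  refine this.congr_deriv ?_
  ring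

theorem phi_t {c t s : ℝ} (hs : 0 < s) (hst : s < t) (htc : t < c) :
    HasDerivAt (fun u => phiC c u s)
     (((c^2 - 3*t^2 + 2*t*s) + 2*c*(s / (2 * √(t*s)) * √(c^2 - t^2 + t*s)
        + √(t*s) * ((-(2*t) + s) / (2 * √(c^2 - t^2 + t*s))))) / (c^2 - t^2)^2
        + 4 * t / (c^2 - t^2) * phiC c t s) t := by
  obtain ⟨ht, hc, hD, hx, hp⟩ := reg_pos hs hst htc
  have := ((((hasDerivAt_id t).mul ((D_t (c := c) (t := t)).add
      ((hasDerivAt_id t).mul_const s))).add_const (c^2*s)).add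
    (((x_t hx).mul (p_t hp)).const_mul (2*c))).div ((D_t (c := c) (t := t)).pow 2)
      (pow_ne_zero 2 hD.ne')
  refine this.congr_deriv ?_
  simp only [phiC, Pi.mul_apply, Pi.add_apply, id, Pi.pow_apply]
  have : 0 < √(t*s) := Real.sqrt_pos.2 hx
  have : 0 < √(c^2 - t^2 + t*s) := Real.sqrt_pos.2 hp
  generalize √(c^2 - t^2 + t*s) = p at *
  generalize √(t*s) = x at *
  field_simp
  ring

theorem phiC_pos {c t s : ℝ} (hs : 0 < s) (hst : s < t) (htc : t < c) : 0 < phiC c t s := by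
  obtain ⟨ht, hc, hD, hx, hp⟩ := reg_pos hs hst htc
  unfold phiC
  positivity

theorem W_alg {c t s x p D N : ℝ} (hD : D = c^2 - t^2) (hx : x^2 = t*s) (hp : p^2 = c^2-t^2+t*s)
    (x0 : 0 < x) (p0 : 0 < p) (D0 : 0 < D) (t0 : 0 < t) (s0 : 0 < s)
    (hN : N = (t * (c^2 - t^2 + t*s) + c^2 * s + 2 * c * (x * p)) / D^2) (N0 : 0 < N) :
    ((((c^2 - 3*t^2 + 2*t*s) + 2*c*(s / (2 * x) * p
        + x * ((-(2*t) + s) / (2 * p)))) / D^2 + 4 * t / D * N) +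
     ((t^2 + c^2 + 2*c*(t / (2 * x) * p
        + x * (t / (2 * p)))) / D^2)) / N =
    c * (c^2 - t^2 + 2*(t*s)) / (x * p * D) + 2 * t / D := by
  rw [div_eq_iff N0.ne', hN]
  field_simp
  grind

theorem U_alg {c t s x p D N : ℝ} (hD : D = c^2 - t^2) (hx : x^2 = t*s) (hp : p^2 = c^2-t^2+t*s)
    (x0 : 0 < x) (p0 : 0 < p) (D0 : 0 < D) (t0 : 0 < t) (s0 : 0 < s)
    (hN : N = (t * (c^2 - t^2 + t*s) + c^2 * s + 2 * c * (x * p)) / D^2) (N0 : 0 < N) :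
    (s * N + s * (t - s) *
     ((t^2 + c^2 + 2*c*(t / (2 * x) * p
        + x * (t / (2 * p)))) / D^2)) / N = c * x / p := by
  rw [div_eq_iff N0.ne', hN]
  field_simp
  grind

theorem W_s {c t s : ℝ} (hs : 0 < s) (hst : s < t) (htc : t < c) :
    HasDerivAt (fun v => WC c t v)
     (-(c * (c^2-t^2)) / (2 * s * √(t*s) * √(c^2 - t^2 + t*s)^3)) s := by
  obtain ⟨ht, hc, hD, hx, hp⟩ := reg_pos hs hst htc
  have x0 : 0 < √(t*s) := Real.sqrt_pos.2 hx
  have p0 : 0 < √(c^2 - t^2 + t*s) := Real.sqrt_pos.2 hp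
  have := (((((((hasDerivAt_id s).const_mul t).const_mul 2).const_add (c^2 - t^2)).const_mul c).div
    (((x_s hx).mul (p_s hp)).mul_const (c^2-t^2)) (by simp; exact ⟨⟨x0.ne', p0.ne'⟩, hD.ne'⟩)).add_const
      (2 * t / (c^2 - t^2)))
  refine this.congr_deriv ?_
  simp only [Pi.mul_apply, Pi.add_apply, id, Pi.pow_apply]
  have h1 := Real.sq_sqrt hx.le
  have h2 := Real.sq_sqrt hp.le
  generalize √(c^2 - t^2 + t*s) = p at *
  generalize √(t*s) = x at *
  clear this
  generalize c^2 - t^2 = D at *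
  field_simp
  grind

theorem W_t {c t s : ℝ} (hs : 0 < s) (hst : s < t) (htc : t < c) :
    HasDerivAt (fun u => WC c u s)
     ((c * (-(2*t) + 2*s) * (√(t*s) * √(c^2 - t^2 + t*s) * (c^2 - t^2))
       - c * (c^2 - t^2 + 2*(t*s)) * ((s / (2 * √(t*s)) * √(c^2 - t^2 + t*s)
        + √(t*s) * ((-(2*t) + s) / (2 * √(c^2 - t^2 + t*s)))) * (c^2 - t^2)
        + √(t*s) * √(c^2 - t^2 + t*s) * (-(2*t))))
        / (√(t*s) * √(c^2 - t^2 + t*s) * (c^2 - t^2))^2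
       + (2 * (c^2 - t^2) + 4 * t^2) / (c^2-t^2)^2) t := by
  obtain ⟨ht, hc, hD, hx, hp⟩ := reg_pos hs hst htc
  have x0 : 0 < √(t*s) := Real.sqrt_pos.2 hx
  have p0 : 0 < √(c^2 - t^2 + t*s) := Real.sqrt_pos.2 hp
  have := ((((D_t (c := c) (t := t)).add (((hasDerivAt_id t).mul_const s).const_mul 2)).const_mul c).div
    (((x_t hx).mul (p_t hp)).mul (D_t (c := c) (t := t))) (by simp; exact ⟨⟨x0.ne', p0.ne'⟩, hD.ne'⟩)).add
      (((hasDerivAt_id t).const_mul 2).div (D_t (c := c) (t := t)) hD.ne')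
  refine this.congr_deriv ?_
  simp only [Pi.mul_apply, Pi.add_apply, id, Pi.pow_apply]
  ring

theorem U_s {c t s : ℝ} (hs : 0 < s) (hst : s < t) (htc : t < c) :
    HasDerivAt (fun v => UC c t v)
     (c * t * (c^2-t^2) / (2 * √(t*s) * √(c^2 - t^2 + t*s)^3)) s := by
  obtain ⟨ht, hc, hD, hx, hp⟩ := reg_pos hs hst htc
  have x0 : 0 < √(t*s) := Real.sqrt_pos.2 hx
  have p0 : 0 < √(c^2 - t^2 + t*s) := Real.sqrt_pos.2 hp
  have := ((x_s hx).const_mul c).div (p_s hp) p0.ne'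
  refine this.congr_deriv ?_
  have h1 := Real.sq_sqrt hx.le
  have h2 := Real.sq_sqrt hp.le
  generalize √(c^2 - t^2 + t*s) = p at *
  generalize √(t*s) = x at *
  clear this
  generalize c^2 - t^2 = D at *
  field_simp
  grind

theorem final_alg {c t s x p D N : ℝ} (hD : D = c^2 - t^2) (hx : x^2 = t*s)
    (hp : p^2 = c^2-t^2+t*s)
    (x0 : 0 < x) (p0 : 0 < p) (D0 : 0 < D) (t0 : 0 < t) (s0 : 0 < s) (c0 : 0 < c)
    (hN : N = (t * (c^2 - t^2 + t*s) + c^2 * s + 2 * c * (x * p)) / D^2) (N0 : 0 < N) :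
    -(2 / N) *
      (s * (((c * (-(2*t) + 2*s) * (x * p * D)
       - c * (c^2 - t^2 + 2*(t*s)) * ((s / (2 * x) * p
        + x * ((-(2*t) + s) / (2 * p))) * D
        + x * p * (-(2*t)))) / (x * p * D)^2
       + (2 * D + 4 * t^2) / D^2) + (-(c * D) / (2 * s * x * p^3)))
        - s ^ 2 * (t - s) * (-(c * D) / (2 * s * x * p^3)) ^ 2 / (c * t * D / (2 * x * p^3))
        + (c * (c^2 - t^2 + 2*(t*s)) / (x * p * D) + 2 * t / D)) = -4 := by
  have e : s ^ 2 * (t - s) * (-(c * D) / (2 * s * x * p^3)) ^ 2 / (c * t * D / (2 * x * p^3))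
      = (t - s) * (c * D) / (2 * t * x * p^3) := by
    field_simp
  rw [e]
  suffices h : (s * (((c * (-(2*t) + 2*s) * (x * p * D)
       - c * (c^2 - t^2 + 2*(t*s)) * ((s / (2 * x) * p
        + x * ((-(2*t) + s) / (2 * p))) * D
        + x * p * (-(2*t)))) / (x * p * D)^2
       + (2 * D + 4 * t^2) / D^2) + (-(c * D) / (2 * s * x * p^3)))
        - (t - s) * (c * D) / (2 * t * x * p^3)
        + (c * (c^2 - t^2 + 2*(t*s)) / (x * p * D) + 2 * t / D)) = 2 * N by
    rw [h]; field_simp; norm_num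
  rw [hN]
  field_simp
  grind

theorem stmt14 (c : ℝ) (hc : 0 < c)
    (φ : ℝ → ℝ → ℝ)
    (hφ : ∀ t s : ℝ, φ t s =
      (Real.sqrt (t / (c ^ 2 - t ^ 2) + t ^ 2 * s / (c ^ 2 - t ^ 2) ^ 2) +
        Real.sqrt (c ^ 2 * s / (c ^ 2 - t ^ 2) ^ 2)) ^ 2)
    (t s : ℝ) (hs : 0 < s) (hst : s < t) (htc : t < c) :
    -(2 / φ t s) *
      (s * (dT (Wf φ) t s + dS (Wf φ) t s)
        - s ^ 2 * (t - s) * (dS (Wf φ) t s) ^ 2 / dS (Uf φ) t s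
        + Wf φ t s) = -4 := by
  have hφ' : ∀ t s : ℝ, 0 < s → s < t → t < c → φ t s = phiC c t s := fun t s h1 h2 h3 => by
    rw [hφ, phi_eq h1 h2 h3]
  have evS : ∀ F G : ℝ → ℝ → ℝ, (∀ t s : ℝ, 0 < s → s < t → t < c → F t s = G t s) →
      ∀ t s : ℝ, 0 < s → s < t → t < c → dS F t s = deriv (fun v => G t v) s := by
    intro F G h t s h1 h2 h3
    apply Filter.EventuallyEq.deriv_eq
    filter_upwards [Ioo_mem_nhds h1 h2] with v hv using h t v hv.1 hv.2 h3
  have evT : ∀ F G : ℝ → ℝ → ℝ, (∀ t s : ℝ, 0 < s → s < t → t < c → F t s = G t s) →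
      ∀ t s : ℝ, 0 < s → s < t → t < c → dT F t s = deriv (fun u => G u s) t := by
    intro F G h t s h1 h2 h3
    apply Filter.EventuallyEq.deriv_eq
    filter_upwards [Ioo_mem_nhds h2 h3] with v hv using h v s h1 hv.1 hv.2
  have hW : ∀ t s : ℝ, 0 < s → s < t → t < c → Wf φ t s = WC c t s := by
    intro t s h1 h2 h3
    obtain ⟨ht, hc, hD, hx, hp⟩ := reg_pos h1 h2 h3
    rw [Wf, evS _ _ hφ' t s h1 h2 h3, evT _ _ hφ' t s h1 h2 h3, hφ' t s h1 h2 h3,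
      (phi_s h1 h2 h3).deriv, (phi_t h1 h2 h3).deriv]
    exact W_alg rfl (Real.sq_sqrt hx.le) (Real.sq_sqrt hp.le) (Real.sqrt_pos.2 hx)
      (Real.sqrt_pos.2 hp) hD ht h1 rfl (phiC_pos h1 h2 h3)
  have hU : ∀ t s : ℝ, 0 < s → s < t → t < c → Uf φ t s = UC c t s := by
    intro t s h1 h2 h3
    obtain ⟨ht, hc, hD, hx, hp⟩ := reg_pos h1 h2 h3
    rw [Uf, evS _ _ hφ' t s h1 h2 h3, hφ' t s h1 h2 h3, (phi_s h1 h2 h3).deriv]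
    exact U_alg rfl (Real.sq_sqrt hx.le) (Real.sq_sqrt hp.le) (Real.sqrt_pos.2 hx)
      (Real.sqrt_pos.2 hp) hD ht h1 rfl (phiC_pos h1 h2 h3)
  obtain ⟨ht, -, hD, hx, hp⟩ := reg_pos hs hst htc
  rw [evS _ _ hW t s hs hst htc, evT _ _ hW t s hs hst htc, evS _ _ hU t s hs hst htc,
    hW t s hs hst htc, hφ' t s hs hst htc, (W_s hs hst htc).deriv, (W_t hs hst htc).deriv,
    (U_s hs hst htc).deriv]
  exact final_alg rfl (Real.sq_sqrt hx.le) (Real.sq_sqrt hp.le) (Real.sqrt_pos.2 hx)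
      (Real.sqrt_pos.2 hp) hD ht hs hc rfl (phiC_pos hs hst htc)
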